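/- For the Hamiltonian H = H_in + H_clock + H_prop₁ + H_prop₂ + H_out on 3 qubits (with the terms as defined for input x=0 and gate D(π/8)), the expectation ⟨ψ_{x=0}| H |ψ_{x=0}⟩ = sin²(π/8)/3 ≈ 0.0488. -/

import Mathlib

open Matrix
open scoped Kronecker

def pauliX : Matrix (Fin 2) (Fin 2) ℂ := !![0, 1; 1, 0]
def pauliZ : Matrix (Fin 2) (Fin 2) ℂ := !![1, 0; 0, -1]
def proj0 : Matrix (Fin 2) (Fin 2) ℂ := !![1, 0; 0, 0]
def proj1 : Matrix (Fin 2) (Fin 2) ℂ := !![0, 0; 0, 1]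

noncomputable def Dgate (φ : ℝ) : Matrix (Fin 2) (Fin 2) ℂ :=
  (Real.cos φ : ℂ) • pauliZ + (Real.sin φ : ℂ) • pauliX

def ket0 : Fin 2 → ℂ := ![1, 0]
def ket1 : Fin 2 → ℂ := ![0, 1]

/-- Tensor product of three single-qubit vectors. -/
def tens3 (a b c : Fin 2 → ℂ) : Fin 2 × Fin 2 × Fin 2 → ℂ :=
  fun p => a p.1 * (b p.2.1 * c p.2.2)

/-- The history state `|ψ_{x=0}⟩`. -/
noncomputable def ψhist : Fin 2 × Fin 2 × Fin 2 → ℂ :=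
  ((1 / Real.sqrt 3 : ℝ) : ℂ) •
    (tens3 ket0 ket0 ket0 + tens3 ket1 ket1 ket0 +
      tens3 ((Real.sin (Real.pi / 8) : ℂ) • ket0 - (Real.cos (Real.pi / 8) : ℂ) • ket1)
        ket1 ket1)

noncomputable def Hin : Matrix (Fin 2 × Fin 2 × Fin 2) (Fin 2 × Fin 2 × Fin 2) ℂ :=
  (1 - proj0) ⊗ₖ (proj0 ⊗ₖ (1 : Matrix (Fin 2) (Fin 2) ℂ))

noncomputable def Hclock : Matrix (Fin 2 × Fin 2 × Fin 2) (Fin 2 × Fin 2 × Fin 2) ℂ :=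
  (1 : Matrix (Fin 2) (Fin 2) ℂ) ⊗ₖ (proj0 ⊗ₖ proj1)

noncomputable def Hprop1 : Matrix (Fin 2 × Fin 2 × Fin 2) (Fin 2 × Fin 2 × Fin 2) ℂ :=
  (1 / 2 : ℂ) •
    ((1 : Matrix (Fin 2) (Fin 2) ℂ) ⊗ₖ (proj0 ⊗ₖ (1 : Matrix (Fin 2) (Fin 2) ℂ))
      - pauliX ⊗ₖ (pauliX ⊗ₖ (1 : Matrix (Fin 2) (Fin 2) ℂ))
      + (1 : Matrix (Fin 2) (Fin 2) ℂ) ⊗ₖ (proj1 ⊗ₖ proj0))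

noncomputable def Hprop2 : Matrix (Fin 2 × Fin 2 × Fin 2) (Fin 2 × Fin 2 × Fin 2) ℂ :=
  (1 / 2 : ℂ) •
    ((1 : Matrix (Fin 2) (Fin 2) ℂ) ⊗ₖ ((1 : Matrix (Fin 2) (Fin 2) ℂ) ⊗ₖ proj1)
      - Dgate (Real.pi / 8) ⊗ₖ ((1 : Matrix (Fin 2) (Fin 2) ℂ) ⊗ₖ pauliX)
      + (1 : Matrix (Fin 2) (Fin 2) ℂ) ⊗ₖ (proj1 ⊗ₖ proj0))

noncomputable def Hout : Matrix (Fin 2 × Fin 2 × Fin 2) (Fin 2 × Fin 2 × Fin 2) ℂ :=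
  proj0 ⊗ₖ ((1 : Matrix (Fin 2) (Fin 2) ℂ) ⊗ₖ proj1)

/-- The expectation of the full Hamiltonian
`H = H_in + H_clock + H_prop₁ + H_prop₂ + H_out` in the history state equals
`sin²(π/8)/3 ≈ 0.0488`. -/
theorem history_state_energy :
    star ψhist ⬝ᵥ (Hin + Hclock + Hprop1 + Hprop2 + Hout).mulVec ψhist
      = ((Real.sin (Real.pi / 8) ^ 2 / 3 : ℝ) : ℂ) := by
  have h3 : ((Real.sqrt 3 : ℝ) : ℂ) ^ 2 = 3 := by
    rw [← Complex.ofReal_pow, Real.sq_sqrt (by norm_num)]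
    norm_num
  have h0 : ((Real.sqrt 3 : ℝ) : ℂ) ≠ 0 := by
    intro h
    rw [h] at h3
    norm_num at h3
  have hsc : ((Real.sin (Real.pi / 8) : ℝ) : ℂ) ^ 2 + ((Real.cos (Real.pi / 8) : ℝ) : ℂ) ^ 2 = 1 := by
    rw [← Complex.ofReal_pow, ← Complex.ofReal_pow, ← Complex.ofReal_add, Real.sin_sq_add_cos_sq]
    norm_num
  have hr : (((1 / Real.sqrt 3 : ℝ) : ℂ)) ^ 2 = 1 / 3 := by
    push_cast
    rw [div_pow, h3]
    norm_num
  unfold ψhist Hin Hclock Hprop1 Hprop2 Hout Dgate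
  generalize Real.sin (Real.pi / 8) = s at *
  generalize Real.cos (Real.pi / 8) = c at *
  generalize (1 / Real.sqrt 3 : ℝ) = r at *
  simp [dotProduct, mulVec, Fintype.sum_prod_type, Fin.sum_univ_two, tens3, ket0, ket1,
    proj0, proj1, pauliX, pauliZ, Matrix.one_apply, -mul_eq_mul_left_iff, -mul_eq_mul_right_iff]
  grind
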